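/- arXiv:1607.05008 — 2 statements merged into one kernel-verified Lean document; each statement's English description precedes it below -/
import Mathlib

section
/- Let P : ℕ → ℝ be a sequence of expected partitioning costs with P(0) = P(1) = 0, and suppose there exist constants A > 0 and d ∈ ℕ with |P(n)| ≤ A·(n+1)^d for all n. Let C be the dual-pivot quickselect cost array defined from P by the standard recurrence, and for k ≥ 1 let C_k(z) = ∑_{n≥0} C(n,k)·z^n for real z with |z| < 1. Then for every fixed j ≥ 1: all these series converge absolutely on (−1,1), C_j is twice differentiable on (−1,1) with C_j(0) = 0 and C_j'(0) = 0, and for every z ∈ (−1,1) one has C_j''(z) − (2/(1−z)²)·C_j(z) = ∑_{n ≥ max(j,2)} n(n−1)·P(n)·z^{n−2} + (2/(1−z))·∑_{k=1}^{j−1} C_k(z)·z^{j−k−1} + 2·∑_{k=1}^{j−2} (j−k−1)·C_k(z)·z^{j−k−2}. -/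
open Finset

/-- Harmonic numbers `H_n = ∑_{k=1}^n 1/k`. -/
noncomputable def H (n : ℕ) : ℝ := ∑ k ∈ Finset.Icc 1 n, (1 : ℝ) / k

/-- Alternating harmonic numbers `H^alt_n = ∑_{k=1}^n (-1)^k/k`. -/
noncomputable def Halt (n : ℕ) : ℝ := ∑ k ∈ Finset.Icc 1 n, (-1 : ℝ) ^ k / k

/-- The dual-pivot quickselect cost array defined from expected partitioning
costs `P` by the standard recurrence:  `C(n,j) = 0` whenever `n ≤ 1` or `j < 1`
or `j > n`; and for `n ≥ 2` and `1 ≤ j ≤ n`,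
`C(n,j) = P(n) + (2/(n(n−1)))·( ∑_{s=j}^{n−2} (n−1−s)·C(s,j)
  + ∑_{m=1}^{n−2} ∑_{s=max(0,j−m−1)}^{min(j−2, n−m−2)} C(m, j−s−1)
  + ∑_{ℓ=n−j+1}^{n−2} (n−1−ℓ)·C(ℓ, n−j+1) )`.
(The `attach` is only needed for the termination proof.) -/
noncomputable def qsCost (P : ℕ → ℝ) : ℕ → ℤ → ℝ
  | n, j =>
    if n ≤ 1 ∨ j < 1 ∨ (n : ℤ) < j then 0
    else
      P n + 2 / ((n : ℝ) * ((n : ℝ) - 1)) *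
        ((∑ s ∈ (Finset.Icc j.toNat (n - 2)).attach,
            ((n : ℝ) - 1 - (s : ℕ)) * qsCost P (s : ℕ) j) +
         (∑ m ∈ (Finset.Icc 1 (n - 2)).attach,
            ∑ s ∈ Finset.Icc (max 0 (j - ((m : ℕ) : ℤ) - 1))
                (min (j - 2) ((n : ℤ) - ((m : ℕ) : ℤ) - 2)),
              qsCost P (m : ℕ) (j - s - 1)) +
         (∑ l ∈ (Finset.Icc ((n : ℤ) - j + 1).toNat (n - 2)).attach,
            ((n : ℝ) - 1 - (l : ℕ)) * qsCost P (l : ℕ) ((n : ℤ) - j + 1)))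
  termination_by n j => n
  decreasing_by
    · have hs := s.2; simp only [Finset.mem_Icc] at hs; omega
    · have hm := m.2; simp only [Finset.mem_Icc] at hm; omega
    · have hl := l.2; simp only [Finset.mem_Icc] at hl; omega

/-- `C_k(z) = ∑_{n≥0} C(n,k)·z^n`, the generating function of the costs of
selecting the `k`-th smallest element. -/
noncomputable def rankGF (P : ℕ → ℝ) (k : ℕ) (z : ℝ) : ℝ :=
  ∑' n : ℕ, qsCost P n (k : ℤ) * z ^ n

/-!
In terms of the formal power series `C_j = ∑ C(n,j) Xⁿ` and `G = ∑ Xⁿ`, the recurrence is the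
formal differential equation `C_j'' = F_j + 2 G² C_j`: the weights `n - 1 - s` of the leftmost part
are the coefficients of `G²`, the choices of the sizes of the two outer parts account for a factor
`G` and a power of `X`, and the rightmost part is brought to the same form by the symmetry
`C(n,j) = C(n,n+1-j)`. The series `F_j` only involves `P` and the `C_k` with `k < j`.

Up to a normalization the coefficients of `G²` are averaging weights, so a solution of
`f'' = g + 2 G² f` has coefficients bounded, up to an additive constant, by the partial sums of
`∑ ‖gₙ‖`, and hence converges wherever `g` and `G` do. By induction on `j` all `C_j` converge, and
the formal equation can be evaluated, since summation at a point is a homomorphism on the algebra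
of convergent series.
-/

section ConvergentSeries

open PowerSeries FormalMultilinearSeries

variable {𝕜 : Type*} {ρ : ℝ}

/-- The sum `∑ aₙ zⁿ` of a formal power series at a point; by the convention of `tsum` it is `0`
where the series does not converge. -/
noncomputable def seriesSum [NormedField 𝕜] (f : 𝕜⟦X⟧) (z : 𝕜) : 𝕜 :=
  ∑' n : ℕ, coeff n f * z ^ n

lemma seriesSum_apply_zero [NormedField 𝕜] (f : 𝕜⟦X⟧) : seriesSum f 0 = coeff 0 f := by
  rw [seriesSum, tsum_eq_single 0 fun n hn ↦ by rw [zero_pow hn, mul_zero], pow_zero, mul_one]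

lemma seriesSum_algebraMap [NormedField 𝕜] (c z : 𝕜) :
    seriesSum (algebraMap 𝕜 𝕜⟦X⟧ c) z = c := by
  rw [seriesSum, tsum_eq_single 0 fun n hn ↦ by simp [coeff_C, hn]]
  simp

lemma seriesSum_X [NormedField 𝕜] (z : 𝕜) : seriesSum X z = z := by
  rw [seriesSum, tsum_eq_single 1 fun n hn ↦ by simp [coeff_X, hn]]
  simp

lemma seriesSum_mk_one [NormedField 𝕜] [CompleteSpace 𝕜] {z : 𝕜} (hz : ‖z‖ < 1) :
    seriesSum (PowerSeries.mk 1) z = (1 - z)⁻¹ := by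
  simpa [seriesSum] using tsum_geometric_of_norm_lt_one hz

lemma coeff_mul_mul_pow {R : Type*} [CommSemiring R] (f g : R⟦X⟧) (n : ℕ) (z : R) :
    coeff n (f * g) * z ^ n =
      ∑ i ∈ antidiagonal n, coeff i.1 f * z ^ i.1 * (coeff i.2 g * z ^ i.2) := by
  rw [coeff_mul, sum_mul]
  refine sum_congr rfl fun i hi ↦ ?_
  rw [← HasAntidiagonal.mem_antidiagonal.1 hi, pow_add]
  ring

lemma coeff_derivSeries_ofScalars_one [NontriviallyNormedField 𝕜] (f : 𝕜⟦X⟧) (n : ℕ) :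
    (ofScalars 𝕜 fun n ↦ coeff n f).derivSeries.coeff n 1 = coeff n (d⁄dX 𝕜 f) := by
  rw [derivSeries_coeff_one, coeff_ofScalars, coeff_derivative, nsmul_eq_mul, mul_comm,
    Nat.cast_succ]

lemma norm_coeff_derivative_le [NontriviallyNormedField 𝕜] (f : 𝕜⟦X⟧) (n : ℕ) :
    ‖coeff n (d⁄dX 𝕜 f)‖ ≤ ‖(ofScalars 𝕜 fun n ↦ coeff n f).derivSeries n‖ := by
  rw [← coeff_derivSeries_ofScalars_one, norm_apply_eq_norm_coef]
  exact ContinuousLinearMap.unit_le_opNorm _ _ norm_one.le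

variable (𝕜 ρ) in
/-- The algebra of formal power series that converge absolutely on the open disc of radius `ρ`. -/
def convergentSeries [NormedField 𝕜] : Subalgebra 𝕜 𝕜⟦X⟧ where
  carrier := {f | ∀ z : 𝕜, ‖z‖ < ρ → Summable fun n ↦ ‖coeff n f * z ^ n‖}
  algebraMap_mem' c z _ := summable_of_ne_finset_zero (s := {0}) fun n hn ↦ by
    simp [coeff_C, notMem_singleton.1 hn]
  add_mem' {f g} hf hg z hz := .of_nonneg_of_le (fun _ ↦ norm_nonneg _)
    (fun n ↦ by rw [map_add, add_mul]; exact norm_add_le _ _) ((hf z hz).add (hg z hz))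
  mul_mem' {f g} hf hg z hz := by
    simpa only [coeff_mul_mul_pow] using
      summable_norm_sum_mul_antidiagonal_of_summable_norm (hf z hz) (hg z hz)

namespace convergentSeries

section NormedField

variable [NormedField 𝕜] {f g : 𝕜⟦X⟧} {z : 𝕜}

lemma mk_one_mem (hρ : ρ ≤ 1) : PowerSeries.mk 1 ∈ convergentSeries 𝕜 ρ := fun z hz ↦ by
  simpa using summable_geometric_of_lt_one (norm_nonneg z) (hz.trans_le hρ)

lemma X_mem : X ∈ convergentSeries 𝕜 ρ := fun z _ ↦
  summable_of_ne_finset_zero (s := {1}) fun n hn ↦ by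
    simp [coeff_X, notMem_singleton.1 hn]

lemma mem_of_norm_coeff_le {g : ℝ⟦X⟧} (hg : g ∈ convergentSeries ℝ ρ)
    (h : ∀ n, ‖coeff n f‖ ≤ coeff n g) : f ∈ convergentSeries 𝕜 ρ := fun z hz ↦
  .of_nonneg_of_le (fun _ ↦ norm_nonneg _)
    (fun n ↦ by
      rw [norm_mul, norm_pow]
      exact (mul_le_mul_of_nonneg_right (h n) (by positivity)).trans (le_abs_self _))
    (hg ‖z‖ (by rwa [norm_norm]))

lemma mk_norm_coeff_mem [NormedAlgebra ℝ 𝕜] (hf : f ∈ convergentSeries 𝕜 ρ) :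
    PowerSeries.mk (fun n ↦ ‖coeff n f‖) ∈ convergentSeries ℝ ρ := fun r hr ↦
  (hf (algebraMap ℝ 𝕜 r) (by rwa [norm_algebraMap'])).congr fun n ↦ by
    simp [norm_mul, norm_pow, norm_algebraMap']

variable [CompleteSpace 𝕜]

lemma hasSum_seriesSum (hf : f ∈ convergentSeries 𝕜 ρ) (hz : ‖z‖ < ρ) :
    HasSum (fun n ↦ coeff n f * z ^ n) (seriesSum f z) :=
  (hf z hz).of_norm.hasSum

lemma seriesSum_add (hf : f ∈ convergentSeries 𝕜 ρ) (hg : g ∈ convergentSeries 𝕜 ρ)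
    (hz : ‖z‖ < ρ) : seriesSum (f + g) z = seriesSum f z + seriesSum g z := by
  simpa only [seriesSum, map_add, add_mul] using
    ((hasSum_seriesSum hf hz).add (hasSum_seriesSum hg hz)).tsum_eq

lemma seriesSum_mul (hf : f ∈ convergentSeries 𝕜 ρ) (hg : g ∈ convergentSeries 𝕜 ρ)
    (hz : ‖z‖ < ρ) : seriesSum (f * g) z = seriesSum f z * seriesSum g z := by
  simp only [seriesSum, coeff_mul_mul_pow,
    tsum_mul_tsum_eq_tsum_sum_antidiagonal_of_summable_norm (hf z hz) (hg z hz)]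

/-- Summation at a point `z` of the disc of convergence, as a homomorphism of algebras. -/
noncomputable def sumAlgHom (hz : ‖z‖ < ρ) : convergentSeries 𝕜 ρ →ₐ[𝕜] 𝕜 where
  toFun f := seriesSum f z
  map_one' := by simpa using seriesSum_algebraMap 1 z
  map_mul' f g := seriesSum_mul f.2 g.2 hz
  map_zero' := by simpa using seriesSum_algebraMap 0 z
  map_add' f g := seriesSum_add f.2 g.2 hz
  commutes' c := seriesSum_algebraMap c z

end NormedField

section Derivative

variable [DenselyNormedField 𝕜] {f : 𝕜⟦X⟧} {z : 𝕜}

lemma lt_radius_ofScalars (hf : f ∈ convergentSeries 𝕜 ρ) (hz : ‖z‖ < ρ) :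
    (‖z‖₊ : ENNReal) < (ofScalars 𝕜 fun n ↦ coeff n f).radius := by
  obtain ⟨w, hzw, hwρ⟩ := NormedField.exists_lt_norm_lt 𝕜 (norm_nonneg z) hz
  calc (‖z‖₊ : ENNReal) < ‖w‖₊ := by exact_mod_cast hzw
    _ ≤ _ := le_radius_of_summable_norm _ <| (hf w hwρ).congr fun n ↦ by
      rw [ofScalars_norm, norm_mul, norm_pow, coe_nnnorm]

lemma derivative_mem (hf : f ∈ convergentSeries 𝕜 ρ) : d⁄dX 𝕜 f ∈ convergentSeries 𝕜 ρ :=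
  fun z hz ↦ .of_nonneg_of_le (fun _ ↦ norm_nonneg _)
    (fun n ↦ by
      rw [norm_mul, norm_pow]
      exact mul_le_mul_of_nonneg_right (norm_coeff_derivative_le f n) (by positivity))
    (summable_norm_mul_pow _
      ((lt_radius_ofScalars hf hz).trans_le (radius_le_radius_derivSeries _)))

variable [CompleteSpace 𝕜]

lemma hasDerivAt_seriesSum (hf : f ∈ convergentSeries 𝕜 ρ) (hz : ‖z‖ < ρ) :
    HasDerivAt (seriesSum f) (seriesSum (d⁄dX 𝕜 f) z) z := by
  set p := ofScalars 𝕜 fun n ↦ coeff n f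
  have hz_mem : z ∈ Metric.eball 0 p.radius := by
    simpa [enorm_eq_nnnorm] using lt_radius_ofScalars hf hz
  have hp : HasFPowerSeriesOnBall (seriesSum f) p 0 p.radius := by
    have sum_eq : p.sum = seriesSum f := ofScalarsSum_eq_tsum _
    exact sum_eq ▸ p.hasFPowerSeriesOnBall (pos_of_gt (lt_radius_ofScalars hf hz))
  have hasSum_deriv : HasSum (fun n ↦ coeff n (d⁄dX 𝕜 f) * z ^ n) (deriv (seriesSum f) z) := by
    simpa only [apply_eq_pow_smul_coeff, zero_add, ContinuousLinearMap.apply_apply,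
      _root_.smul_apply, smul_eq_mul, coeff_derivSeries_ofScalars_one, p,
      fderiv_apply_one_eq_deriv, mul_comm]
      using (hp.fderiv.hasSum hz_mem).mapL (ContinuousLinearMap.apply 𝕜 𝕜 (1 : 𝕜))
  have differentiableAt : DifferentiableAt 𝕜 (seriesSum f) z :=
    hp.differentiableOn.differentiableAt (Metric.isOpen_eball.mem_nhds hz_mem)
  rw [show seriesSum (d⁄dX 𝕜 f) z = deriv (seriesSum f) z from hasSum_deriv.tsum_eq]
  exact differentiableAt.hasDerivAt

lemma hasDerivAt_deriv_seriesSum (hf : f ∈ convergentSeries 𝕜 ρ) (hz : ‖z‖ < ρ) :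
    HasDerivAt (deriv (seriesSum f)) (seriesSum (d⁄dX 𝕜 (d⁄dX 𝕜 f)) z) z := by
  refine (hasDerivAt_seriesSum (derivative_mem hf) hz).congr_of_eventuallyEq ?_
  filter_upwards [(isOpen_lt continuous_norm continuous_const).mem_nhds hz] with w hw
  exact (hasDerivAt_seriesSum hf hw).deriv

end Derivative

end convergentSeries

end ConvergentSeries

section Recurrence

open PowerSeries

lemma coeff_mk_one_sq_mul {R : Type*} [CommRing R] (f : R⟦X⟧) (n : ℕ) :
    coeff n (PowerSeries.mk 1 ^ 2 * f) = ∑ s ∈ range (n + 1), ((n : R) + 1 - s) * coeff s f := by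
  rw [mk_one_pow_eq_mk_choose_add R 1, mul_comm, coeff_mul,
    Nat.sum_antidiagonal_eq_sum_range_succ_mk]
  refine sum_congr rfl fun s hs ↦ ?_
  have hs : s ≤ n := Nat.lt_succ_iff.1 (mem_range.1 hs)
  rw [coeff_mk, Nat.choose_one_right, Nat.cast_add, Nat.cast_sub hs]
  push_cast
  ring

lemma coeff_mul_mk_one {R : Type*} [Semiring R] (f : R⟦X⟧) (n : ℕ) :
    coeff n (f * PowerSeries.mk 1) = ∑ m ∈ range (n + 1), coeff m f := by
  simp [coeff_mul, Nat.sum_antidiagonal_eq_sum_range_succ_mk]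

lemma coeff_derivative_derivative {R : Type*} [CommSemiring R] (f : R⟦X⟧) (n : ℕ) :
    coeff n (d⁄dX R (d⁄dX R f)) = ((n : R) + 2) * (n + 1) * coeff (n + 2) f := by
  rw [coeff_derivative, coeff_derivative]
  push_cast
  ring

lemma seriesSum_derivative_derivative {𝕜 : Type*} [NormedField 𝕜] (f : 𝕜⟦X⟧) (z : 𝕜) :
    seriesSum (d⁄dX 𝕜 (d⁄dX 𝕜 f)) z =
      ∑' n : ℕ, (n : 𝕜) * ((n : 𝕜) - 1) * coeff n f * z ^ (n - 2) := by
  have support_subset : Function.support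
      (fun n : ℕ ↦ (n : 𝕜) * ((n : 𝕜) - 1) * coeff n f * z ^ (n - 2)) ⊆ Set.range (· + 2) := by
    intro n hn
    match n with
    | 0 | 1 => simp at hn
    | n + 2 => exact ⟨n, rfl⟩
  rw [← (add_left_injective 2).tsum_eq support_subset]
  refine tsum_congr fun n ↦ ?_
  rw [coeff_derivative_derivative, Nat.add_sub_cancel]
  push_cast
  ring

lemma two_mul_sum_range_succ_sub (n : ℕ) :
    2 * ∑ s ∈ range (n + 1), ((n : ℝ) + 1 - s) = (n + 2) * (n + 1) := by
  induction n with
  | zero => norm_num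
  | succ n ih =>
    have shift : ∑ s ∈ range (n + 1), (((n + 1 : ℕ) : ℝ) + 1 - s) =
        ∑ s ∈ range (n + 1), ((n : ℝ) + 1 - s) + (n + 1) := by
      simp [sum_sub_distrib]
      ring
    rw [sum_range_succ, shift, mul_add, mul_add, ih]
    push_cast
    ring

variable {𝕜 : Type*} [RCLike 𝕜]

lemma norm_weighted_sum_le {a : ℕ → 𝕜} {B : ℝ} {n : ℕ} (h : ∀ s ≤ n, ‖a s‖ ≤ B) :
    2 * ‖∑ s ∈ range (n + 1), ((n : 𝕜) + 1 - s) * a s‖ ≤ ((n : ℝ) + 2) * (n + 1) * B := by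
  have norm_weight (s : ℕ) (hs : s ≤ n) : ‖(n : 𝕜) + 1 - s‖ = (n : ℝ) + 1 - s := by
    rw [← Nat.cast_succ, ← Nat.cast_sub (by lia), RCLike.norm_natCast, Nat.cast_sub (by lia),
      Nat.cast_succ]
  rw [← two_mul_sum_range_succ_sub, mul_assoc, sum_mul]
  refine mul_le_mul_of_nonneg_left (norm_sum_le_of_le _ fun s hs ↦ ?_) zero_le_two
  have hs : s ≤ n := Nat.lt_succ_iff.1 (mem_range.1 hs)
  rw [norm_mul, norm_weight s hs]
  exact mul_le_mul_of_nonneg_left (h s hs) (norm_weight s hs ▸ norm_nonneg _)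

-- The weights `2 (n + 1 - s) / ((n + 2) (n + 1))` average over `s ≤ n`, so each step adds to a
-- monotone bound on the earlier terms at most the norm of the forcing term.
lemma norm_le_of_weighted_average_recurrence {a g : ℕ → 𝕜}
    (h : ∀ n : ℕ, ((n : 𝕜) + 2) * (n + 1) * a (n + 2) =
      g n + 2 * ∑ s ∈ range (n + 1), ((n : 𝕜) + 1 - s) * a s) (n : ℕ) :
    ‖a n‖ ≤ ‖a 0‖ + ‖a 1‖ + ∑ m ∈ range n, ‖g m‖ := by
  induction n using Nat.strong_induction_on with
  | _ n ih =>
  match n with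
  | 0 => simp
  | 1 => rw [sum_range_one]; linarith [norm_nonneg (a 0), norm_nonneg (g 0)]
  | n + 2 =>
    set B := ‖a 0‖ + ‖a 1‖ + ∑ m ∈ range n, ‖g m‖
    have earlier_le (s : ℕ) (hs : s ≤ n) : ‖a s‖ ≤ B := (ih s (by lia)).trans <|
      add_le_add_right (sum_le_sum_of_subset_of_nonneg (range_mono hs)
        fun _ _ _ ↦ norm_nonneg _) _
    have norm_coeff : ‖((n : 𝕜) + 2) * (n + 1)‖ = ((n : ℝ) + 2) * (n + 1) := by
      have := RCLike.norm_natCast (K := 𝕜) ((n + 2) * (n + 1))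
      push_cast at this
      exact this
    have one_le : 1 ≤ ((n : ℝ) + 2) * (n + 1) := by
      have : (0 : ℝ) ≤ n := n.cast_nonneg
      nlinarith
    have scaled_le := calc
      ((n : ℝ) + 2) * (n + 1) * ‖a (n + 2)‖
        = ‖g n + 2 * ∑ s ∈ range (n + 1), ((n : 𝕜) + 1 - s) * a s‖ := by
          rw [← h, norm_mul, norm_coeff]
      _ ≤ ‖g n‖ + 2 * ‖∑ s ∈ range (n + 1), ((n : 𝕜) + 1 - s) * a s‖ := by
          simpa using norm_add_le (g n) (2 * ∑ s ∈ range (n + 1), ((n : 𝕜) + 1 - s) * a s)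
      _ ≤ ((n : ℝ) + 2) * (n + 1) * ‖g n‖ + ((n : ℝ) + 2) * (n + 1) * B :=
          add_le_add (le_mul_of_one_le_left (norm_nonneg _) one_le)
            (norm_weighted_sum_le earlier_le)
      _ = ((n : ℝ) + 2) * (n + 1) * (‖g n‖ + B) := (mul_add ..).symm
    calc ‖a (n + 2)‖ ≤ ‖g n‖ + B := le_of_mul_le_mul_left scaled_le (by positivity)
      _ ≤ ‖a 0‖ + ‖a 1‖ + ∑ m ∈ range (n + 2), ‖g m‖ := by
        rw [sum_range_succ, sum_range_succ]
        linarith [norm_nonneg (g (n + 1))]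

lemma convergentSeries.mem_of_derivative_derivative_eq {ρ : ℝ} (hρ : ρ ≤ 1) {f g : 𝕜⟦X⟧}
    (hg : g ∈ convergentSeries 𝕜 ρ)
    (h : d⁄dX 𝕜 (d⁄dX 𝕜 f) = g + (2 : 𝕜) • (PowerSeries.mk 1 ^ 2 * f)) :
    f ∈ convergentSeries 𝕜 ρ := by
  have recurrence (n : ℕ) : ((n : 𝕜) + 2) * (n + 1) * coeff (n + 2) f =
      coeff n g + 2 * ∑ s ∈ range (n + 1), ((n : 𝕜) + 1 - s) * coeff s f := by
    rw [← coeff_derivative_derivative, h, map_add, coeff_smul, coeff_mk_one_sq_mul, smul_eq_mul]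
  have majorant_mem : (C (‖coeff 0 f‖ + ‖coeff 1 f‖) + PowerSeries.mk fun n ↦ ‖coeff n g‖) *
      PowerSeries.mk 1 ∈ convergentSeries ℝ ρ :=
    mul_mem (add_mem (algebraMap_mem _ _) (mk_norm_coeff_mem hg)) (mk_one_mem hρ)
  refine mem_of_norm_coeff_le majorant_mem fun n ↦
    (norm_le_of_weighted_average_recurrence (a := fun n ↦ coeff n f) (g := fun n ↦ coeff n g)
      recurrence n).trans ?_
  calc ‖coeff 0 f‖ + ‖coeff 1 f‖ + ∑ m ∈ range n, ‖coeff m g‖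
    _ ≤ ‖coeff 0 f‖ + ‖coeff 1 f‖ + ∑ m ∈ range (n + 1), ‖coeff m g‖ :=
      add_le_add_right (sum_le_sum_of_subset_of_nonneg (range_mono n.le_succ)
        fun _ _ _ ↦ norm_nonneg _) _
    _ = _ := by simp [coeff_mul_mk_one, sum_add_distrib, coeff_C]

lemma summable_norm_mul_pow_of_polynomial_growth {a : ℕ → 𝕜} {A : ℝ} {d : ℕ}
    (ha : ∀ n : ℕ, ‖a n‖ ≤ A * ((n : ℝ) + 1) ^ d) {z : 𝕜} (hz : ‖z‖ < 1) :
    Summable fun n ↦ ‖a n * z ^ n‖ := by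
  have hA : 0 ≤ A := by simpa using (norm_nonneg _).trans (ha 0)
  have majorant_mem : C (A * d.factorial) * PowerSeries.mk 1 ^ (d + 1) ∈ convergentSeries ℝ 1 :=
    mul_mem (algebraMap_mem _ _) (pow_mem (convergentSeries.mk_one_mem le_rfl) _)
  have a_mem : PowerSeries.mk a ∈ convergentSeries 𝕜 1 := by
    refine convergentSeries.mem_of_norm_coeff_le majorant_mem fun n ↦ ?_
    have pow_le_choose : (n + 1) ^ d ≤ d.factorial * (d + n).choose d := by
      rw [add_comm d n, ← Nat.ascFactorial_eq_factorial_mul_choose]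
      exact Nat.pow_succ_le_ascFactorial (n + 1) d
    rw [mk_one_pow_eq_mk_choose_add, coeff_C_mul, coeff_mk, coeff_mk, mul_assoc]
    exact (ha n).trans (mul_le_mul_of_nonneg_left (by exact_mod_cast pow_le_choose) hA)
  simpa only [coeff_mk] using a_mem z hz

end Recurrence

section Quickselect

open PowerSeries

variable {P : ℕ → ℝ}

lemma qsCost_eq_zero {n : ℕ} {j : ℤ} (h : n ≤ 1 ∨ j < 1 ∨ (n : ℤ) < j) : qsCost P n j = 0 := by
  rw [qsCost, if_pos h]

/-- The contribution to the cost of selecting the `j`-th smallest of `n + 2` elements of the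
recursive calls on the leftmost part, up to the factor `2 / ((n + 2) (n + 1))`. By symmetry
`outerCost P n (n + 3 - j)` is the contribution of the rightmost part. -/
noncomputable def outerCost (P : ℕ → ℝ) (n : ℕ) (j : ℤ) : ℝ :=
  ∑ s ∈ Icc j.toNat n, ((n : ℝ) + 1 - s) * qsCost P s j

/-- The contribution to the cost of selecting the `j`-th smallest of `n + 2` elements of the
recursive calls on the middle part, up to the factor `2 / ((n + 2) (n + 1))`; `m` is the size of
the middle part and `s` that of the leftmost one. -/
noncomputable def middleCost (P : ℕ → ℝ) (n : ℕ) (j : ℤ) : ℝ :=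
  ∑ m ∈ Icc 1 n, ∑ s ∈ Icc (max 0 (j - m - 1)) (min (j - 2) ((n : ℤ) - m)), qsCost P m (j - s - 1)

lemma qsCost_add_two {n : ℕ} {j : ℤ} (hj : 1 ≤ j) (hjn : j ≤ n + 2) :
    qsCost P (n + 2) j = P (n + 2) + 2 / (((n : ℝ) + 2) * (n + 1)) *
      (outerCost P n j + middleCost P n j + outerCost P n (n + 3 - j)) := by
  have size_sub_one : ((n + 2 : ℕ) : ℝ) - 1 = n + 1 := by push_cast; ring
  have size_sub (m : ℕ) : ((n + 2 : ℕ) : ℤ) - m - 2 = n - m := by push_cast; ring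
  have reflected_rank : ((n + 2 : ℕ) : ℤ) - j + 1 = n + 3 - j := by push_cast; ring
  rw [qsCost, if_neg (by lia), Nat.add_sub_cancel,
    sum_attach (Icc j.toNat n) fun s ↦ (((n + 2 : ℕ) : ℝ) - 1 - s) * qsCost P s j,
    sum_attach (Icc 1 n) fun m ↦ ∑ s ∈ Icc (max 0 (j - (m : ℤ) - 1))
      (min (j - 2) (((n + 2 : ℕ) : ℤ) - m - 2)), qsCost P m (j - s - 1),
    sum_attach (Icc (((n + 2 : ℕ) : ℤ) - j + 1).toNat n) fun l ↦
      (((n + 2 : ℕ) : ℝ) - 1 - l) * qsCost P l (((n + 2 : ℕ) : ℤ) - j + 1)]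
  simp only [outerCost, middleCost, size_sub_one, size_sub, reflected_rank]
  push_cast
  rfl

lemma mul_qsCost_add_two (n : ℕ) {j : ℤ} (hj : 1 ≤ j) :
    ((n : ℝ) + 2) * (n + 1) * qsCost P (n + 2) j =
      ((n : ℝ) + 2) * (n + 1) * (if j ≤ n + 2 then P (n + 2) else 0) +
        2 * (outerCost P n j + middleCost P n j + outerCost P n (n + 3 - j)) := by
  split_ifs with hjn
  · rw [qsCost_add_two hj hjn]
    field_simp
  · have outer : outerCost P n j = 0 := by rw [outerCost, Icc_eq_empty (by lia), sum_empty]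
    have middle : middleCost P n j = 0 := sum_eq_zero fun m _ ↦ by
      rw [Icc_eq_empty (by lia), sum_empty]
    have reflected : outerCost P n (n + 3 - j) = 0 := sum_eq_zero fun s _ ↦ by
      rw [qsCost_eq_zero (by lia), mul_zero]
    rw [qsCost_eq_zero (by lia), outer, middle, reflected]
    ring

lemma qsCost_symm (n : ℕ) (j : ℤ) : qsCost P n j = qsCost P n (n + 1 - j) := by
  induction n using Nat.strong_induction_on generalizing j with
  | _ n ih =>
  by_cases h : n ≤ 1 ∨ j < 1 ∨ (n : ℤ) < j
  · rw [qsCost_eq_zero h, qsCost_eq_zero (by lia)]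
  obtain ⟨n, rfl⟩ : ∃ m, n = m + 2 := ⟨n - 2, by lia⟩
  have middleCost_symm : middleCost P n j = middleCost P n (n + 3 - j) := by
    refine sum_congr rfl fun m hm ↦ ?_
    rw [mem_Icc] at hm
    refine sum_nbij' (fun s ↦ n - m - s) (fun s ↦ n - m - s) ?_ ?_ ?_ ?_ fun s _ ↦ ?_
    iterate 4 { simp only [mem_Icc]; lia }
    rw [ih m (by lia)]
    congr 1
    ring
  have reflect : ((n + 2 : ℕ) : ℤ) + 1 - j = n + 3 - j := by push_cast; ring
  rw [reflect, qsCost_add_two (by lia) (by lia), qsCost_add_two (by lia) (by lia),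
    middleCost_symm, sub_sub_cancel]
  ring

/-- The generating function of the costs of selecting the `k`-th smallest element, as a formal
power series. -/
noncomputable def rankSeries (P : ℕ → ℝ) (k : ℕ) : ℝ⟦X⟧ :=
  PowerSeries.mk fun n ↦ qsCost P n k

lemma rankGF_eq_seriesSum (P : ℕ → ℝ) (k : ℕ) : rankGF P k = seriesSum (rankSeries P k) := by
  ext z
  simp only [rankGF, seriesSum, rankSeries, coeff_mk]

lemma outerCost_eq_coeff (P : ℕ → ℝ) (n j : ℕ) :
    outerCost P n j = coeff n (PowerSeries.mk 1 ^ 2 * rankSeries P j) := by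
  simp only [outerCost, coeff_mk_one_sq_mul, rankSeries, coeff_mk]
  refine sum_subset (fun s hs ↦ ?_) fun s hs hs' ↦ ?_
  · simp only [mem_Icc, mem_range] at *
    lia
  · simp only [mem_Icc, mem_range] at *
    rw [qsCost_eq_zero (by lia), mul_zero]

lemma coeff_X_pow_mul_mul_mk_one {R : Type*} [CommSemiring R] (f : R⟦X⟧) (n p : ℕ) :
    coeff n (X ^ p * f * PowerSeries.mk 1) =
      ∑ m ∈ range (n + 1), if p ≤ n - m then coeff m f else 0 := by
  rw [mul_comm (X ^ p), mul_assoc, coeff_mul, Nat.sum_antidiagonal_eq_sum_range_succ_mk]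
  simp [coeff_X_pow_mul']

-- The middle part contains the sought element as its `k`-th smallest when the leftmost part has
-- size `s = j - k - 1`.
lemma sum_qsCost_middle {n m : ℕ} (hm : m ≤ n) (j : ℕ) :
    ∑ s ∈ Icc (max 0 ((j : ℤ) - m - 1)) (min ((j : ℤ) - 2) ((n : ℤ) - m)), qsCost P m (j - s - 1) =
      ∑ k ∈ Icc 1 (j - 1), if j - k - 1 ≤ n - m then qsCost P m k else 0 := by
  have rank_le_size : ∑ k ∈ Icc 1 (j - 1) with j - k - 1 ≤ n - m, qsCost P m k =
      ∑ k ∈ Icc 1 (j - 1) with j - k - 1 ≤ n - m ∧ k ≤ m, qsCost P m k := by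
    refine (sum_subset (fun k hk ↦ ?_) fun k hk hk' ↦ qsCost_eq_zero ?_).symm
    all_goals simp only [mem_filter, mem_Icc] at *; lia
  rw [← sum_filter, rank_le_size]
  refine sum_nbij' (fun s ↦ ((j : ℤ) - s - 1).toNat) (fun k ↦ (j : ℤ) - k - 1) ?_ ?_ ?_ ?_
    fun s hs ↦ ?_
  iterate 4 { simp only [mem_filter, mem_Icc]; lia }
  rw [mem_Icc] at hs
  congr 1
  lia

lemma middleCost_eq_coeff (P : ℕ → ℝ) (n j : ℕ) : middleCost P n j =
    coeff n ((∑ k ∈ Icc 1 (j - 1), X ^ (j - k - 1) * rankSeries P k) * PowerSeries.mk 1) := by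
  simp only [sum_mul, map_sum, coeff_X_pow_mul_mul_mk_one, rankSeries, coeff_mk]
  rw [sum_comm, middleCost]
  refine (sum_congr rfl fun m hm ↦ sum_qsCost_middle (mem_Icc.1 hm).2 j).trans ?_
  refine sum_subset (fun m hm ↦ ?_) fun m hm hm' ↦ sum_eq_zero fun k _ ↦ ?_
  · simp only [mem_Icc, mem_range] at *
    lia
  · simp only [mem_Icc, mem_range] at *
    rw [qsCost_eq_zero (by lia), ite_self]

lemma outerCost_reflect_eq_coeff (P : ℕ → ℝ) {j : ℕ} (hj : 1 ≤ j) (n : ℕ) :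
    outerCost P n (n + 3 - j) =
      coeff n (∑ k ∈ Icc 1 (j - 2), ((j : ℝ) - k - 1) • (X ^ (j - k - 2) * rankSeries P k)) := by
  simp only [outerCost, map_sum, coeff_smul, coeff_X_pow_mul', rankSeries, coeff_mk, smul_eq_mul,
    mul_ite, mul_zero]
  rw [← sum_filter]
  refine sum_nbij' (fun l ↦ l + j - n - 2) (fun k ↦ n + 2 + k - j) ?_ ?_ ?_ ?_ fun l hl ↦ ?_
  iterate 4 { simp only [mem_filter, mem_Icc]; lia }
  rw [mem_Icc] at hl
  obtain ⟨k, hk⟩ : ∃ k, l + j = n + 2 + k := ⟨l + j - n - 2, by lia⟩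
  have weight_eq : (n : ℝ) + 1 - l = j - k - 1 := by
    have : (l : ℝ) + j = n + 2 + k := by exact_mod_cast hk
    linarith
  rw [show l + j - n - 2 = k by lia, show n - (j - k - 2) = l by lia, weight_eq,
    qsCost_symm, show (l : ℤ) + 1 - (n + 3 - j) = k by lia]

/-- The generating function of the costs `P n` with `n ≥ j`, the sizes of the inputs in which
there is a `j`-th smallest element. -/
noncomputable def costTail (P : ℕ → ℝ) (j : ℕ) : ℝ⟦X⟧ :=
  PowerSeries.mk fun n ↦ if j ≤ n then P n else 0

/-- The inhomogeneous term of the differential equation of `rankSeries P j`, as a formal power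
series. -/
noncomputable def rankForcing (P : ℕ → ℝ) (j : ℕ) : ℝ⟦X⟧ :=
  d⁄dX ℝ (d⁄dX ℝ (costTail P j)) +
    (2 : ℝ) • ((∑ k ∈ Icc 1 (j - 1), X ^ (j - k - 1) * rankSeries P k) * PowerSeries.mk 1) +
    (2 : ℝ) • ∑ k ∈ Icc 1 (j - 2), ((j : ℝ) - k - 1) • (X ^ (j - k - 2) * rankSeries P k)

theorem derivative_derivative_rankSeries (P : ℕ → ℝ) {j : ℕ} (hj : 1 ≤ j) :
    d⁄dX ℝ (d⁄dX ℝ (rankSeries P j)) =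
      rankForcing P j + (2 : ℝ) • (PowerSeries.mk 1 ^ 2 * rankSeries P j) := by
  ext n
  have recurrence := mul_qsCost_add_two (P := P) n (j := j) (by exact_mod_cast hj)
  rw [outerCost_eq_coeff, middleCost_eq_coeff, outerCost_reflect_eq_coeff P hj] at recurrence
  have lhs : coeff n (d⁄dX ℝ (d⁄dX ℝ (rankSeries P j))) =
      ((n : ℝ) + 2) * (n + 1) * qsCost P (n + 2) j := by
    rw [coeff_derivative_derivative, rankSeries, coeff_mk]
  have tail : coeff n (d⁄dX ℝ (d⁄dX ℝ (costTail P j))) =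
      ((n : ℝ) + 2) * (n + 1) * (if (j : ℤ) ≤ n + 2 then P (n + 2) else 0) := by
    rw [coeff_derivative_derivative, costTail, coeff_mk]
    norm_cast
  rw [lhs, recurrence, rankForcing]
  simp only [map_add, coeff_smul, smul_eq_mul, tail]
  ring

namespace convergentSeries

variable {ρ : ℝ}

lemma costTail_mem (hP : PowerSeries.mk P ∈ convergentSeries ℝ ρ) (j : ℕ) :
    costTail P j ∈ convergentSeries ℝ ρ :=
  mem_of_norm_coeff_le (mk_norm_coeff_mem hP) fun n ↦ by
    simp only [costTail, coeff_mk]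
    split_ifs
    · rfl
    · exact norm_zero.trans_le (norm_nonneg _)

lemma rankForcing_mem (hρ : ρ ≤ 1) (hP : PowerSeries.mk P ∈ convergentSeries ℝ ρ) {j : ℕ}
    (h : ∀ k < j, rankSeries P k ∈ convergentSeries ℝ ρ) :
    rankForcing P j ∈ convergentSeries ℝ ρ := by
  have shift_mem (p k : ℕ) (hk : k < j) : X ^ p * rankSeries P k ∈ convergentSeries ℝ ρ :=
    mul_mem (pow_mem X_mem p) (h k hk)
  refine add_mem (add_mem (derivative_mem (derivative_mem (costTail_mem hP j)))
    (Subalgebra.smul_mem _ (mul_mem (sum_mem fun k hk ↦ shift_mem _ k ?_) (mk_one_mem hρ)) _))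
    (Subalgebra.smul_mem _ (sum_mem fun k hk ↦ Subalgebra.smul_mem _ (shift_mem _ k ?_) _) _)
  all_goals rw [mem_Icc] at hk; lia

lemma rankSeries_mem (hρ : ρ ≤ 1) (hP : PowerSeries.mk P ∈ convergentSeries ℝ ρ) (j : ℕ) :
    rankSeries P j ∈ convergentSeries ℝ ρ := by
  induction j using Nat.strong_induction_on with
  | _ j ih =>
  rcases j.eq_zero_or_pos with rfl | hj
  · have rankSeries_zero : rankSeries P 0 = 0 := by
      ext n
      rw [rankSeries, coeff_mk, qsCost_eq_zero (by lia), map_zero]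
    exact rankSeries_zero ▸ zero_mem _
  · exact mem_of_derivative_derivative_eq hρ (rankForcing_mem hρ hP ih)
      (derivative_derivative_rankSeries P hj)

end convergentSeries

lemma seriesSum_derivative_derivative_costTail (P : ℕ → ℝ) (j : ℕ) (z : ℝ) :
    seriesSum (d⁄dX ℝ (d⁄dX ℝ (costTail P j))) z =
      ∑' n : ℕ, if max j 2 ≤ n then (n : ℝ) * ((n : ℝ) - 1) * P n * z ^ (n - 2) else 0 := by
  rw [seriesSum_derivative_derivative]
  refine tsum_congr fun n ↦ ?_
  match n with
  | 0 | 1 => simp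
  | n + 2 => simp [costTail]

open convergentSeries

section Evaluation

variable {ρ : ℝ} {z : ℝ}

lemma seriesSum_rankForcing (hρ : ρ ≤ 1) (hP : PowerSeries.mk P ∈ convergentSeries ℝ ρ)
    (hz : ‖z‖ < ρ) (j : ℕ) :
    seriesSum (rankForcing P j) z =
      (∑' n : ℕ, if max j 2 ≤ n then (n : ℝ) * ((n : ℝ) - 1) * P n * z ^ (n - 2) else 0) +
        2 / (1 - z) * ∑ k ∈ Icc 1 (j - 1), rankGF P k z * z ^ (j - k - 1) +
        2 * ∑ k ∈ Icc 1 (j - 2), ((j : ℝ) - k - 1) * rankGF P k z * z ^ (j - k - 2) := by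
  let T : convergentSeries ℝ ρ := ⟨d⁄dX ℝ (d⁄dX ℝ (costTail P j)),
    derivative_mem (derivative_mem (costTail_mem hP j))⟩
  let S (k : ℕ) : convergentSeries ℝ ρ := ⟨rankSeries P k, rankSeries_mem hρ hP k⟩
  let G : convergentSeries ℝ ρ := ⟨PowerSeries.mk 1, mk_one_mem hρ⟩
  let Z : convergentSeries ℝ ρ := ⟨X, X_mem⟩
  have T_eval : sumAlgHom hz T = _ := seriesSum_derivative_derivative_costTail P j z
  have S_eval (k : ℕ) : sumAlgHom hz (S k) = rankGF P k z :=
    (congrFun (rankGF_eq_seriesSum P k) z).symm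
  have G_eval : sumAlgHom hz G = (1 - z)⁻¹ := seriesSum_mk_one (hz.trans_le hρ)
  have Z_eval : sumAlgHom hz Z = z := seriesSum_X z
  have lift : rankForcing P j = (T + (2 : ℝ) • ((∑ k ∈ Icc 1 (j - 1), Z ^ (j - k - 1) * S k) * G) +
      (2 : ℝ) • ∑ k ∈ Icc 1 (j - 2), ((j : ℝ) - k - 1) • (Z ^ (j - k - 2) * S k) :
      convergentSeries ℝ ρ) := by
    push_cast
    rfl
  rw [lift]
  change sumAlgHom hz _ = _
  simp only [map_add, map_smul, map_mul, map_sum, map_pow, T_eval, S_eval, G_eval, Z_eval,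
    smul_eq_mul]
  congr 2
  · rw [div_eq_mul_inv, mul_assoc, mul_comm _ (1 - z)⁻¹]
    simp only [mul_comm]
  · exact sum_congr rfl fun k _ ↦ by ring

lemma deriv_deriv_rankGF (hρ : ρ ≤ 1) (hP : PowerSeries.mk P ∈ convergentSeries ℝ ρ)
    (hz : ‖z‖ < ρ) {j : ℕ} (hj : 1 ≤ j) :
    deriv (deriv (rankGF P j)) z =
      seriesSum (rankForcing P j) z + 2 / (1 - z) ^ 2 * rankGF P j z := by
  let F : convergentSeries ℝ ρ := ⟨rankForcing P j,
    rankForcing_mem hρ hP fun k _ ↦ rankSeries_mem hρ hP k⟩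
  let S : convergentSeries ℝ ρ := ⟨rankSeries P j, rankSeries_mem hρ hP j⟩
  let G : convergentSeries ℝ ρ := ⟨PowerSeries.mk 1, mk_one_mem hρ⟩
  have G_eval : sumAlgHom hz G = (1 - z)⁻¹ := seriesSum_mk_one (hz.trans_le hρ)
  rw [rankGF_eq_seriesSum, (hasDerivAt_deriv_seriesSum S.2 hz).deriv,
    derivative_derivative_rankSeries P hj]
  change sumAlgHom hz (F + (2 : ℝ) • (G ^ 2 * S)) = sumAlgHom hz F + _ * sumAlgHom hz S
  rw [map_add, map_smul, map_mul, map_pow, G_eval, smul_eq_mul, inv_pow, div_eq_mul_inv, mul_assoc]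

end Evaluation

end Quickselect

theorem rank_gf_ode_general (P : ℕ → ℝ) {ρ : ℝ} (hρ₀ : 0 < ρ) (hρ₁ : ρ ≤ 1)
    (hP : ∀ z ∈ Set.Ioo (-ρ) ρ, Summable fun n : ℕ ↦ P n * z ^ n) (j : ℕ) (hj : 1 ≤ j) :
    (∀ k : ℕ, 1 ≤ k → ∀ z ∈ Set.Ioo (-ρ) ρ,
        Summable fun n : ℕ ↦ |qsCost P n (k : ℤ) * z ^ n|) ∧
    (∀ z ∈ Set.Ioo (-ρ) ρ,
        DifferentiableAt ℝ (rankGF P j) z ∧ DifferentiableAt ℝ (deriv (rankGF P j)) z) ∧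
    rankGF P j 0 = 0 ∧ deriv (rankGF P j) 0 = 0 ∧
    (∀ z ∈ Set.Ioo (-ρ) ρ,
        deriv (deriv (rankGF P j)) z - 2 / (1 - z) ^ 2 * rankGF P j z =
          (∑' n : ℕ, if max j 2 ≤ n then (n : ℝ) * ((n : ℝ) - 1) * P n * z ^ (n - 2) else 0)
          + 2 / (1 - z) * ∑ k ∈ Icc 1 (j - 1), rankGF P k z * z ^ (j - k - 1)
          + 2 * ∑ k ∈ Icc 1 (j - 2),
              ((j : ℝ) - (k : ℝ) - 1) * rankGF P k z * z ^ (j - k - 2)) := by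
  have mem_Ioo (z : ℝ) : z ∈ Set.Ioo (-ρ) ρ ↔ ‖z‖ < ρ := abs_lt.symm
  simp only [mem_Ioo] at hP ⊢
  have P_mem : PowerSeries.mk P ∈ convergentSeries ℝ ρ := fun z hz ↦ by
    simpa only [PowerSeries.coeff_mk] using (hP z hz).norm
  have S_mem := convergentSeries.rankSeries_mem hρ₁ P_mem
  have gf_eq := rankGF_eq_seriesSum P j
  refine ⟨fun k _ z hz ↦ ?_, fun z hz ↦ ⟨?_, ?_⟩, ?_, ?_, fun z hz ↦ ?_⟩
  · simpa only [rankSeries, PowerSeries.coeff_mk, Real.norm_eq_abs] using S_mem k z hz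
  · exact gf_eq ▸ (convergentSeries.hasDerivAt_seriesSum (S_mem j) hz).differentiableAt
  · exact gf_eq ▸ (convergentSeries.hasDerivAt_deriv_seriesSum (S_mem j) hz).differentiableAt
  · rw [gf_eq, seriesSum_apply_zero, rankSeries, PowerSeries.coeff_mk,
      qsCost_eq_zero (.inl zero_le_one)]
  · rw [gf_eq, (convergentSeries.hasDerivAt_seriesSum (S_mem j) (by simpa using hρ₀)).deriv,
      seriesSum_apply_zero, PowerSeries.coeff_derivative, rankSeries, PowerSeries.coeff_mk,
      qsCost_eq_zero (.inl le_rfl), zero_mul]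
  · rw [deriv_deriv_rankGF hρ₁ P_mem hz hj, add_sub_cancel_right,
      seriesSum_rankForcing hρ₁ P_mem hz]

/-- Suppose `P 0 = P 1 = 0` and `|P n| ≤ A·(n+1)^d`.  For fixed
`j ≥ 1`: all the series `C_k(z)` (`k ≥ 1`) converge absolutely on `(−1,1)`,
`C_j` is twice differentiable on `(−1,1)` with `C_j(0) = C_j'(0) = 0`, and
`C_j''(z) − (2/(1−z)²)·C_j(z) = ∑_{n ≥ max(j,2)} n(n−1)·P(n)·z^{n−2}
 + (2/(1−z))·∑_{k=1}^{j−1} C_k(z)·z^{j−k−1}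
 + 2·∑_{k=1}^{j−2} (j−k−1)·C_k(z)·z^{j−k−2}`. -/
theorem rank_gf_ode (P : ℕ → ℝ) (hP0 : P 0 = 0) (hP1 : P 1 = 0)
    (A : ℝ) (hA : 0 < A) (d : ℕ) (hPbound : ∀ n : ℕ, |P n| ≤ A * ((n : ℝ) + 1) ^ d)
    (j : ℕ) (hj : 1 ≤ j) :
    (∀ k : ℕ, 1 ≤ k → ∀ z ∈ Set.Ioo (-1 : ℝ) 1,
        Summable (fun n : ℕ => |qsCost P n (k : ℤ) * z ^ n|)) ∧
    (∀ z ∈ Set.Ioo (-1 : ℝ) 1,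
        DifferentiableAt ℝ (rankGF P j) z ∧ DifferentiableAt ℝ (deriv (rankGF P j)) z) ∧
    rankGF P j 0 = 0 ∧ deriv (rankGF P j) 0 = 0 ∧
    (∀ z ∈ Set.Ioo (-1 : ℝ) 1,
        deriv (deriv (rankGF P j)) z - 2 / (1 - z) ^ 2 * rankGF P j z =
          (∑' n : ℕ, if max j 2 ≤ n then (n : ℝ) * ((n : ℝ) - 1) * P n * z ^ (n - 2) else 0)
          + 2 / (1 - z) * ∑ k ∈ Finset.Icc 1 (j - 1), rankGF P k z * z ^ (j - k - 1)
          + 2 * ∑ k ∈ Finset.Icc 1 (j - 2),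
              ((j : ℝ) - (k : ℝ) - 1) * rankGF P k z * z ^ (j - k - 2)) :=
  rank_gf_ode_general P one_pos le_rfl (fun _ hz ↦ .of_norm
    (summable_norm_mul_pow_of_polynomial_growth (𝕜 := ℝ) hPbound (abs_lt.2 hz))) j hj
end

section
/- Let C be the dual-pivot quickselect cost array defined from the 'Count' partitioning costs P^ct by the standard recurrence. Then for every n ≥ 3, the average number of comparisons to select the smallest element satisfies C(n,1) = C(n,n) = (9/4)·n + (1/12)·∑_{k=1}^{n−1} H_k/(n−k) − (1/6)·∑_{k=2}^n H^alt_{k−1}/k − (43/18)·H_n + (1/18)·H^alt_n + 5/108 + ( (n−1)/(36·n·(n−2)) if n is odd ) − ( 1/(36·(n−1)) if n is even ). -/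
open Finset

/-- Generating function of the expected partitioning costs of the strategy
"Count". -/
noncomputable def countGF (z : ℝ) : ℝ :=
  3 / (2 * (1 - z) ^ 2) + (Real.log ((1 + z) / (1 - z)) / 2) / (2 * (1 - z))
  - 31 * z ^ 2 / (8 * (1 - z)) - ((3 + z) / 8) * (Real.log ((1 + z) / (1 - z)) / 2)
  - 3 / 2 - 25 * z / 8

/-! For `j = 1` and `j = n` the middle sum of the recurrence is empty and one of the other two is
too, so both costs equal `q n`, where `n (n - 1) q n = n (n - 1) P n + 2 ∑_{s < n} (n - 1 - s) q s`.
Second differences remove the sum, and the resulting second-order operator factors: with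
`u n = (n + 1) q (n + 1) - (n - 2) q n` one gets `(n + 1) (u (n + 1) - u n) = Δ² (n (n - 1) P n)`.
For the strategy "Count" all parity-dependent terms of `n (n - 1) P n` cancel in its second
difference, so `u` is summed in terms of harmonic-type sums. The closed form then only has to
satisfy a first-order recurrence, and no initial value is needed because the coefficient `n - 2`
vanishes at `n = 2`.
-/

open Filter Topology

/-! ### Power series -/

lemma eq_of_eventually_hasSum_mul_pow {𝕜 : Type*} [NontriviallyNormedField 𝕜]
    {a b : ℕ → 𝕜} {F : 𝕜 → 𝕜}
    (ha : ∀ᶠ z in 𝓝 0, HasSum (fun n ↦ a n * z ^ n) (F z))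
    (hb : ∀ᶠ z in 𝓝 0, HasSum (fun n ↦ b n * z ^ n) (F z)) : a = b := by
  have hasFPowerSeriesAt {c : ℕ → 𝕜} (hc : ∀ᶠ z in 𝓝 0, HasSum (fun n ↦ c n * z ^ n) (F z)) :
      HasFPowerSeriesAt F (FormalMultilinearSeries.ofScalars 𝕜 c) 0 := by
    rw [hasFPowerSeriesAt_iff]
    filter_upwards [hc] with z hz
    simpa [FormalMultilinearSeries.coeff_ofScalars, mul_comm] using hz
  have series_eq := (hasFPowerSeriesAt ha).eq_formalMultilinearSeries (hasFPowerSeriesAt hb)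
  funext n
  simpa [FormalMultilinearSeries.coeff_ofScalars] using congrArg (·.coeff n) series_eq

lemma hasSum_sum_range_mul_pow {𝕜 : Type*} [NormedField 𝕜] [CompleteSpace 𝕜] {a : ℕ → 𝕜} {z s : 𝕜}
    (hz : ‖z‖ < 1) (habs : Summable fun n ↦ ‖a n * z ^ n‖) (ha : HasSum (fun n ↦ a n * z ^ n) s) :
    HasSum (fun n ↦ (∑ k ∈ range (n + 1), a k) * z ^ n) (s / (1 - z)) := by
  have h := hasSum_sum_range_mul_of_summable_norm habs (summable_norm_geometric_of_norm_lt_one hz)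
  rw [ha.tsum_eq, tsum_geometric_of_norm_lt_one hz, ← div_eq_mul_inv] at h
  refine h.congr_fun fun n ↦ ?_
  rw [sum_mul]
  refine sum_congr rfl fun k hk ↦ ?_
  rw [mul_assoc, pow_mul_pow_sub z (mem_range_succ_iff.mp hk)]

lemma hasSum_pred_mul_pow {R : Type*} [CommRing R] [TopologicalSpace R] [IsTopologicalRing R]
    {a : ℕ → R} {z s : R} (ha₀ : a 0 = 0) (ha : HasSum (fun n ↦ a n * z ^ n) s) :
    HasSum (fun n ↦ a (n - 1) * z ^ n) (z * s) := by
  rw [← hasSum_nat_add_iff' 1]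
  simpa [ha₀, pow_succ', mul_left_comm] using ha.mul_left z

lemma hasSum_ite_eq_mul_pow {R : Type*} [Semiring R] [TopologicalSpace R] (k : ℕ) (c z : R) :
    HasSum (fun n ↦ (if n = k then c else 0) * z ^ n) (c * z ^ k) := by
  simpa using hasSum_single (f := fun n ↦ (if n = k then c else 0) * z ^ n) k
    fun n hn ↦ by simp [hn]

/-! ### Harmonic sums -/

lemma H_succ (n : ℕ) : H (n + 1) = H n + 1 / ((n : ℝ) + 1) := by
  simp [H, sum_Icc_succ_top]

lemma Halt_succ (n : ℕ) : Halt (n + 1) = Halt n - (-1) ^ n / ((n : ℝ) + 1) := by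
  simp [Halt, sum_Icc_succ_top, pow_succ, neg_div, sub_eq_add_neg]

lemma sum_range_one_div_add_one (n : ℕ) : ∑ k ∈ range n, 1 / ((k : ℝ) + 1) = H n := by
  induction n with
  | zero => simp [H]
  | succ n ih => rw [sum_range_succ, ih, H_succ]

lemma sum_range_one_div_sub (n : ℕ) : ∑ k ∈ range n, 1 / ((n : ℝ) - k) = H n := by
  rw [← sum_range_one_div_add_one, ← sum_range_reflect]
  refine sum_congr rfl fun k hk ↦ ?_
  rw [Nat.sub_sub, Nat.cast_sub (by have := mem_range.mp hk; omega)]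
  push_cast
  ring_nf

/-- The convolution `∑_{k=1}^{n-1} H_k/(n-k)` of the harmonic numbers with the reciprocals. -/
noncomputable def harmonicConv (n : ℕ) : ℝ := ∑ k ∈ Icc 1 (n - 1), H k / ((n : ℝ) - (k : ℝ))

lemma harmonicConv_eq_sum_range (n : ℕ) :
    harmonicConv n = ∑ k ∈ range n, H k / ((n : ℝ) - (k : ℝ)) := by
  refine sum_subset (fun k hk ↦ ?_) fun k hk hk' ↦ ?_
  · simp only [mem_Icc, mem_range] at hk ⊢
    omega
  · obtain rfl : k = 0 := by
      simp only [mem_Icc, mem_range] at hk hk'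
      omega
    simp [H]

lemma harmonicConv_succ (n : ℕ) :
    harmonicConv (n + 1) = harmonicConv n + 2 * H n / ((n : ℝ) + 1) := by
  have partial_fractions {k : ℕ} (hk : k ∈ range n) :
      H (k + 1) / ((n : ℝ) - k) =
        H k / ((n : ℝ) - k) + (1 / ((k : ℝ) + 1) + 1 / ((n : ℝ) - k)) / ((n : ℝ) + 1) := by
    have : (n : ℝ) - k ≠ 0 := sub_ne_zero.mpr (mod_cast (mem_range.mp hk).ne')
    rw [H_succ]
    field_simp
    ring
  calc harmonicConv (n + 1) = ∑ k ∈ range n, H (k + 1) / ((n : ℝ) - k) := by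
        rw [harmonicConv_eq_sum_range, sum_range_succ']
        simp [H]
    _ = harmonicConv n + 2 * H n / ((n : ℝ) + 1) := by
        rw [sum_congr rfl fun k ↦ partial_fractions, sum_add_distrib, ← sum_div, sum_add_distrib,
          sum_range_one_div_add_one, sum_range_one_div_sub, ← harmonicConv_eq_sum_range, two_mul]

/-- The iterated harmonic sum `∑_{k=2}^n H^alt_{k-1}/k`. -/
noncomputable def altHarmonicSum (n : ℕ) : ℝ := ∑ k ∈ Icc 2 n, Halt (k - 1) / (k : ℝ)

lemma altHarmonicSum_succ (n : ℕ) :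
    altHarmonicSum (n + 1) = altHarmonicSum n + Halt n / ((n : ℝ) + 1) := by
  cases n with
  | zero => simp [altHarmonicSum, Halt]
  | succ n => simp [altHarmonicSum, sum_Icc_succ_top]

/-! ### Partitioning costs of the strategy "Count" -/

/-- The coefficient of `zⁿ` in `artanh z`. Division by zero makes it vanish at `n = 0`, as it
should. -/
noncomputable def artanhCoeff (n : ℕ) : ℝ := (1 - (-1) ^ n) / (2 * n)

lemma hasSum_artanhCoeff_mul_pow {z : ℝ} (hz : |z| < 1) :
    HasSum (fun n ↦ artanhCoeff n * z ^ n) (Real.log ((1 + z) / (1 - z)) / 2) := by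
  obtain ⟨hz₁, hz₂⟩ := abs_lt.mp hz
  rw [← hasSum_nat_add_iff' 1, Real.log_div (by linarith) (by linarith)]
  have h := ((Real.hasSum_pow_div_log_of_abs_lt_one hz).sub
    (Real.hasSum_pow_div_log_of_abs_lt_one ((abs_neg z).trans_lt hz))).div_const 2
  convert! h using 1
  · funext n
    rw [neg_pow z, artanhCoeff]
    push_cast
    field_simp
  · rw [sum_range_one, artanhCoeff, Nat.cast_zero, mul_zero, div_zero, zero_mul, sub_zero,
      sub_neg_eq_add 1 z]
    ring

lemma sum_range_artanhCoeff (n : ℕ) :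
    ∑ k ∈ range (n + 1), artanhCoeff k = (H n - Halt n) / 2 := by
  induction n with
  | zero => simp [artanhCoeff, H, Halt]
  | succ n ih =>
    rw [sum_range_succ, ih, H_succ, Halt_succ, artanhCoeff, pow_succ]
    push_cast
    field_simp
    ring

/-- The power series coefficients of `countGF`. The two `if` terms are the low-order corrections
that make the partitioning costs of `0` and `1` elements vanish. -/
noncomputable def countCoeff (n : ℕ) : ℝ :=
  3 / 2 * ((n : ℝ) + 1) + (H n - Halt n) / 4 - 31 / 8
    - 3 / 8 * artanhCoeff n - 1 / 8 * artanhCoeff (n - 1)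
    + (if n = 0 then 19 / 8 else 0) + (if n = 1 then 3 / 4 else 0)

lemma hasSum_countCoeff_mul_pow {z : ℝ} (hz : |z| < 1) :
    HasSum (fun n ↦ countCoeff n * z ^ n) (countGF z) := by
  have hgeom : HasSum (fun n ↦ (1 : ℝ) * z ^ n) (1 / (1 - z)) := by
    simpa using hasSum_geometric_of_abs_lt_one hz
  have hartanh := hasSum_artanhCoeff_mul_pow hz
  have hgeom_sum := hasSum_sum_range_mul_pow hz hgeom.summable.norm hgeom
  have hartanh_sum := hasSum_sum_range_mul_pow hz hartanh.summable.norm hartanh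
  have hartanh_pred := hasSum_pred_mul_pow (by simp [artanhCoeff]) hartanh
  convert! ((((((hgeom_sum.mul_left (3 / 2)).add (hartanh_sum.mul_left (1 / 2))).sub
    (hgeom.mul_left (31 / 8))).sub (hartanh.mul_left (3 / 8))).sub
    (hartanh_pred.mul_left (1 / 8))).add (hasSum_ite_eq_mul_pow 0 (19 / 8) z)).add
    (hasSum_ite_eq_mul_pow 1 (3 / 4) z) using 1
  · funext n
    rw [sum_range_artanhCoeff, sum_const, card_range, nsmul_one, countCoeff]
    push_cast
    ring
  · have : 1 - z ≠ 0 := sub_ne_zero.mpr (abs_lt.mp hz).2.ne'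
    rw [countGF]
    field_simp
    ring

lemma mul_countCoeff (n : ℕ) :
    (n : ℝ) * (n - 1) * countCoeff n =
      n * (n - 1) * (3 / 2 * (n + 1) - 31 / 8 + (H n - Halt n) / 4)
        + (3 - 4 * n) / 16 + (-1) ^ n * (2 * n - 3) / 16 := by
  rcases n with _ | _ | n
  · norm_num
  · norm_num
  · rw [countCoeff, artanhCoeff, artanhCoeff, if_neg (by omega), if_neg (by omega),
      Nat.add_sub_cancel, pow_succ]
    push_cast
    field_simp
    ring

lemma second_diff_mul_countCoeff (n : ℕ) :
    ((n : ℝ) + 2) * (n + 1) * countCoeff (n + 2) - 2 * ((n + 1) * n * countCoeff (n + 1))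
        + n * (n - 1) * countCoeff n =
      9 * (n + 1) - 7 + (H n - Halt n) / 2 := by
  have h₁ := mul_countCoeff (n + 1)
  have h₂ := mul_countCoeff (n + 2)
  rw [H_succ, Halt_succ] at h₁
  rw [H_succ, H_succ, Halt_succ, Halt_succ] at h₂
  push_cast at h₁ h₂
  rw [show ((n : ℝ) + 1 - 1) = n by ring] at h₁
  rw [show ((n : ℝ) + 2 - 1) = n + 1 by ring] at h₂
  rw [h₁, h₂, mul_countCoeff]
  field_simp
  ring

/-! ### The recurrence for the extreme ranks -/

lemma qsCost_of_le_one (P : ℕ → ℝ) {n : ℕ} (hn : n ≤ 1) (j : ℤ) : qsCost P n j = 0 := by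
  rw [qsCost, if_pos (Or.inl hn)]

lemma qsCost_eq (P : ℕ → ℝ) {n : ℕ} (hn : 2 ≤ n) {j : ℤ} (hj : 1 ≤ j) (hjn : j ≤ n) :
    qsCost P n j = P n + 2 / ((n : ℝ) * ((n : ℝ) - 1)) *
      ((∑ s ∈ Icc j.toNat (n - 2), ((n : ℝ) - 1 - s) * qsCost P s j) +
       (∑ m ∈ Icc 1 (n - 2), ∑ s ∈ Icc (max 0 (j - m - 1)) (min (j - 2) ((n : ℤ) - m - 2)),
          qsCost P m (j - s - 1)) +
       (∑ l ∈ Icc ((n : ℤ) - j + 1).toNat (n - 2),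
          ((n : ℝ) - 1 - l) * qsCost P l ((n : ℤ) - j + 1))) := by
  rw [qsCost, if_neg (by omega),
    sum_attach (Icc j.toNat (n - 2)) fun s ↦ ((n : ℝ) - 1 - s) * qsCost P s j,
    sum_attach (Icc 1 (n - 2)) fun m ↦
      ∑ s ∈ Icc (max 0 (j - m - 1)) (min (j - 2) ((n : ℤ) - m - 2)), qsCost P m (j - s - 1),
    sum_attach (Icc ((n : ℤ) - j + 1).toNat (n - 2))
      fun l ↦ ((n : ℝ) - 1 - l) * qsCost P l ((n : ℤ) - j + 1)]

lemma qsCost_one (P : ℕ → ℝ) {n : ℕ} (hn : 2 ≤ n) :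
    qsCost P n 1 = P n + 2 / ((n : ℝ) * ((n : ℝ) - 1)) *
      ∑ s ∈ Icc 1 (n - 2), ((n : ℝ) - 1 - s) * qsCost P s 1 := by
  have middle_empty (m : ℕ) :
      Icc (max 0 ((1 : ℤ) - m - 1)) (min (1 - 2) ((n : ℤ) - m - 2)) = ∅ :=
    Icc_eq_empty (by omega)
  have last_empty : Icc ((n : ℤ) - 1 + 1).toNat (n - 2) = ∅ := Icc_eq_empty (by omega)
  rw [qsCost_eq P hn le_rfl (by omega), last_empty]
  simp only [middle_empty, sum_empty, sum_const_zero, add_zero, Int.toNat_one]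

lemma qsCost_self (P : ℕ → ℝ) {n : ℕ} (hn : 2 ≤ n) :
    qsCost P n n = P n + 2 / ((n : ℝ) * ((n : ℝ) - 1)) *
      ∑ s ∈ Icc 1 (n - 2), ((n : ℝ) - 1 - s) * qsCost P s 1 := by
  have first_empty : Icc (n : ℤ).toNat (n - 2) = ∅ := Icc_eq_empty (by omega)
  have middle_empty (m : ℕ) :
      Icc (max 0 ((n : ℤ) - m - 1)) (min ((n : ℤ) - 2) ((n : ℤ) - m - 2)) = ∅ :=
    Icc_eq_empty (by omega)
  rw [qsCost_eq P hn (by omega) le_rfl, first_empty]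
  simp only [middle_empty, sum_empty, sum_const_zero, zero_add, sub_self, Int.toNat_one]

lemma qsCost_one_eq_self (P : ℕ → ℝ) (n : ℕ) : qsCost P n 1 = qsCost P n n := by
  rcases Nat.lt_or_ge n 2 with hn | hn
  · simp only [qsCost_of_le_one P (Nat.le_of_lt_succ hn)]
  · rw [qsCost_one P hn, qsCost_self P hn]

lemma mul_qsCost_one (P : ℕ → ℝ) (n : ℕ) :
    (n : ℝ) * (n - 1) * qsCost P n 1 =
      n * (n - 1) * P n + 2 * ∑ s ∈ range n, ((n : ℝ) - 1 - s) * qsCost P s 1 := by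
  rcases n with _ | _ | n
  · simp
  · simp [qsCost_of_le_one]
  · have extend_range : ∑ s ∈ Icc 1 n, (((n + 2 : ℕ) : ℝ) - 1 - s) * qsCost P s 1 =
        ∑ s ∈ range (n + 2), (((n + 2 : ℕ) : ℝ) - 1 - s) * qsCost P s 1 := by
      refine sum_subset (fun s hs ↦ ?_) fun s hs hs' ↦ ?_
      · simp only [mem_Icc, mem_range] at hs ⊢
        omega
      · obtain rfl | rfl : s = 0 ∨ s = n + 1 := by
          simp only [mem_Icc, mem_range] at hs hs'
          omega
        · rw [qsCost_of_le_one P zero_le_one, mul_zero]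
        · rw [Nat.cast_succ (n + 1), add_sub_cancel_right, sub_self, zero_mul]
    rw [qsCost_one P (by omega), show n + 1 + 1 - 2 = n from rfl, extend_range]
    have : ((n + 2 : ℕ) : ℝ) - 1 ≠ 0 := by
      push_cast
      linarith [n.cast_nonneg (α := ℝ)]
    field_simp

/-! ### Reduction to a first-order recurrence -/

/-- The first-order operator `q ↦ (n + 1) q (n + 1) - (n - 2) q n` to which the recurrence for the
smallest rank reduces after one summation. -/
def selectDiff {R : Type*} [CommRing R] (q : ℕ → R) (n : ℕ) : R :=
  (n + 1) * q (n + 1) - (n - 2) * q n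

lemma sum_range_succ_sub_one_sub_mul {R : Type*} [CommRing R] (q : ℕ → R) (n : ℕ) :
    ∑ s ∈ range (n + 1), (((n + 1 : ℕ) : R) - 1 - s) * q s =
      ∑ s ∈ range n, ((n : R) - 1 - s) * q s + ∑ s ∈ range n, q s := by
  rw [sum_range_succ, ← sum_add_distrib]
  push_cast
  rw [add_sub_cancel_right, sub_self, zero_mul, add_zero]
  exact sum_congr rfl fun s _ ↦ by ring

lemma mul_selectDiff_succ_sub {R : Type*} [CommRing R] {q P : ℕ → R}
    (hq : ∀ n : ℕ, (n : R) * (n - 1) * q n =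
      n * (n - 1) * P n + 2 * ∑ s ∈ range n, ((n : R) - 1 - s) * q s) (n : ℕ) :
    (n + 1) * (selectDiff q (n + 1) - selectDiff q n) =
      (n + 2) * (n + 1) * P (n + 2) - 2 * ((n + 1) * n * P (n + 1)) + n * (n - 1) * P n := by
  have h₀ := hq n
  have h₁ := hq (n + 1)
  have h₂ := hq (n + 2)
  rw [sum_range_succ_sub_one_sub_mul] at h₁
  rw [sum_range_succ_sub_one_sub_mul, sum_range_succ_sub_one_sub_mul, sum_range_succ q] at h₂
  simp only [selectDiff]
  push_cast at h₁ h₂ ⊢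
  linear_combination h₂ - 2 * h₁ + h₀

lemma eq_of_selectDiff_eq {R : Type*} [CommRing R] [IsDomain R] [CharZero R] {a b : ℕ → R}
    (h : ∀ n, 2 ≤ n → selectDiff a n = selectDiff b n) {n : ℕ} (hn : 3 ≤ n) : a n = b n := by
  have succ_eq {n : ℕ} (hn : 2 ≤ n) (hab : ((n : R) - 2) * a n = (n - 2) * b n) :
      a (n + 1) = b (n + 1) := by
    have := h n hn
    rw [selectDiff, selectDiff, hab, sub_left_inj] at this
    exact mul_left_cancel₀ n.cast_add_one_ne_zero this
  induction n, hn using Nat.le_induction with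
  | base => exact succ_eq le_rfl (by simp)
  | succ n hn ih => exact succ_eq (by omega) (by rw [ih])

/-! ### The closed form -/

lemma selectDiff_qsCost_countCoeff (n : ℕ) :
    selectDiff (qsCost countCoeff · 1) n =
      9 * n - 7 * H n + 1 / 4 * harmonicConv n - 1 / 2 * altHarmonicSum n := by
  induction n with
  | zero => simp [selectDiff, qsCost_of_le_one, H, harmonicConv, altHarmonicSum]
  | succ n ih =>
    have h := mul_selectDiff_succ_sub (mul_qsCost_one countCoeff) n
    rw [second_diff_mul_countCoeff, ih] at h
    have hne : (n : ℝ) + 1 ≠ 0 := n.cast_add_one_ne_zero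
    refine mul_left_cancel₀ hne ?_
    rw [H_succ, harmonicConv_succ, altHarmonicSum_succ]
    push_cast
    linear_combination h + (7 - (H n - Halt n) / 2) * mul_inv_cancel₀ hne

/-- The parity-dependent correction in the closed form of the cost of selecting the smallest
element. -/
noncomputable def parityTerm (n : ℕ) : ℝ :=
  (if Odd n then ((n : ℝ) - 1) / (36 * (n : ℝ) * ((n : ℝ) - 2)) else 0)
    - (if Even n then 1 / (36 * ((n : ℝ) - 1)) else 0)

lemma parityTerm_of_even {n : ℕ} (hn : Even n) : parityTerm n = -(1 / (36 * ((n : ℝ) - 1))) := by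
  simp [parityTerm, hn, Nat.not_odd_iff_even.mpr hn]

lemma parityTerm_of_odd {n : ℕ} (hn : Odd n) :
    parityTerm n = ((n : ℝ) - 1) / (36 * (n : ℝ) * ((n : ℝ) - 2)) := by
  simp [parityTerm, hn, Nat.not_even_iff_odd.mpr hn]

lemma selectDiff_parityTerm {n : ℕ} (hn : 2 ≤ n) : selectDiff parityTerm n = (-1) ^ n / 18 := by
  have hn' : (2 : ℝ) ≤ n := mod_cast hn
  have hsub₁ : (n : ℝ) - 1 ≠ 0 := by linarith
  rcases n.even_or_odd with heven | hodd
  · rw [selectDiff, parityTerm_of_even heven, parityTerm_of_odd heven.add_one, heven.neg_one_pow]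
    push_cast
    rw [add_sub_cancel_right, show (n : ℝ) + 1 - 2 = n - 1 by ring]
    field_simp
    ring
  · have hsub₂ : (n : ℝ) - 2 ≠ 0 :=
      sub_ne_zero.mpr (mod_cast fun h ↦ Nat.not_even_iff_odd.mpr hodd (h ▸ even_two))
    rw [selectDiff, parityTerm_of_odd hodd, parityTerm_of_even hodd.add_one, hodd.neg_one_pow]
    push_cast
    rw [add_sub_cancel_right]
    field_simp
    ring

/-- The closed form of the expected cost of selecting the smallest of `n ≥ 3` elements with the
strategy "Count". -/
noncomputable def countSmallestCost (n : ℕ) : ℝ :=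
  9 / 4 * n + 1 / 12 * harmonicConv n - 1 / 6 * altHarmonicSum n - 43 / 18 * H n + 1 / 18 * Halt n
    + 5 / 108 + parityTerm n

lemma selectDiff_countSmallestCost {n : ℕ} (hn : 2 ≤ n) :
    selectDiff countSmallestCost n =
      9 * n - 7 * H n + 1 / 4 * harmonicConv n - 1 / 2 * altHarmonicSum n := by
  have hparity := selectDiff_parityTerm hn
  simp only [selectDiff, countSmallestCost, H_succ, Halt_succ, harmonicConv_succ,
    altHarmonicSum_succ] at hparity ⊢
  have hinv : ((n : ℝ) + 1) * ((n : ℝ) + 1)⁻¹ = 1 := mul_inv_cancel₀ n.cast_add_one_ne_zero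
  push_cast
  linear_combination hparity + (H n / 6 - Halt n / 6 - 43 / 18 - (-1) ^ n / 18) * hinv

lemma qsCost_countCoeff_one {n : ℕ} (hn : 3 ≤ n) :
    qsCost countCoeff n 1 = countSmallestCost n :=
  eq_of_selectDiff_eq (a := (qsCost countCoeff · 1))
    (fun n hn ↦ by rw [selectDiff_qsCost_countCoeff, selectDiff_countSmallestCost hn]) hn

/-- Exact cost of selecting the smallest (equivalently, the
largest) element with the strategy "Count", for all `n ≥ 3`. -/
theorem count_smallest_exact (Pct : ℕ → ℝ)
    (hPct : ∀ z : ℝ, |z| < 1 → HasSum (fun n : ℕ => Pct n * z ^ n) (countGF z))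
    (n : ℕ) (hn : 3 ≤ n) :
    qsCost Pct n 1 = qsCost Pct n (n : ℤ) ∧
    qsCost Pct n 1 =
      9 / 4 * (n : ℝ)
      + 1 / 12 * ∑ k ∈ Finset.Icc 1 (n - 1), H k / ((n : ℝ) - (k : ℝ))
      - 1 / 6 * ∑ k ∈ Finset.Icc 2 n, Halt (k - 1) / (k : ℝ)
      - 43 / 18 * H n
      + 1 / 18 * Halt n
      + 5 / 108
      + (if Odd n then ((n : ℝ) - 1) / (36 * (n : ℝ) * ((n : ℝ) - 2)) else 0)
      - (if Even n then 1 / (36 * ((n : ℝ) - 1)) else 0) := by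
  have hball : ∀ᶠ z : ℝ in 𝓝 0, |z| < 1 :=
    continuous_abs.tendsto' 0 0 abs_zero |>.eventually_lt_const one_pos
  obtain rfl : Pct = countCoeff :=
    eq_of_eventually_hasSum_mul_pow (hball.mono hPct)
      (hball.mono fun _ ↦ hasSum_countCoeff_mul_pow)
  refine ⟨qsCost_one_eq_self countCoeff n, ?_⟩
  rw [add_sub_assoc]
  exact qsCost_countCoeff_one hn
end
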